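/- Let n, k be positive integers with n ≥ k, let U be a Haar-distributed random matrix from U(2n), and set Ṽ = (ṽ_{ij}) = Uᵀ J U, where J = ((O, I_n), (−I_n, O)); this encodes the circular symplectic ensemble matrix V = (J Uᵀ Jᵀ) U via ṽ_{ij} = (J V)_{ij}. For any sequences i = (i_1,…,i_{2k}) and j = (j_1,…,j_{2k}) in {1,…,2n}, E[ ṽ_{i_1 i_2} ṽ_{i_3 i_4} ⋯ ṽ_{i_{2k−1} i_{2k}} · conj(ṽ_{j_1 j_2} ṽ_{j_3 j_4} ⋯ ṽ_{j_{2k−1} j_{2k}}) ] = Σ_{σ ∈ S_{2k}} δ_σ(i,j) Wg^{AII}(σ; n), where Wg^{AII}(·; n) := T^Sp(·; n) * Wg^U(·; 2n). Moreover, for any n ≥ 1, if k ≠ l then E[ ṽ_{i_1 i_2} ⋯ ṽ_{i_{2k−1} i_{2k}} · conj(ṽ_{j_1 j_2} ⋯ ṽ_{j_{2l−1} j_{2l}}) ] = 0 for all index sequences. -/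

import Mathlib

/-!
Put `N = 2n` and `K = 2k`. For fixed column sequences `i, j`, the moments
`E[∏ u_{p_s i_s} · conj ∏ u_{q_s j_s}]` are the entries (indexed by `p, q`) of an operator on
`(ℂ^N)^{⊗K}`, which commutes with every `g^{⊗K}`, `g` unitary, by left invariance of the measure
(`momentMatrix_commute`). For `K ≤ N` such an operator is a linear combination of the
permutations of the tensor factors (`exists_perm_coeff`): by diagonal
unitaries with root of unity entries it preserves weights, hence it commutes with `D^{⊗K}` for every
diagonal `D`; the spectral theorem extends this to Hermitian matrices, and a polynomial identity to
all matrices (`commute_tpow`); and an operator commuting with all `A^{⊗K}` is determined by the image of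
`e_1 ⊗ ⋯ ⊗ e_K`, which is supported on the permutations of that vector. Contracting rows by
unitarity shows that the coefficients convolve with `N^{cyc}` to `σ ↦ δ_σ(i,j)`, so they are given
by the Weingarten function (`momentMatrix_eq`).

Expanding `∏ ṽ · conj ∏ ṽ` in the entries of `J` leaves, for each permutation `τ`, the Gram sum
`Σ_p J(p) J(p ∘ τ)`, which equals `T^Sp(τ; n)` (`sum_J_eq`). To see this, observe that the union of
two perfect matchings is bipartite (`exists_two_colouring`); since `J` is antisymmetric, swapping
points inside pairs changes the Gram sum only by a sign and brings `τ` to a normal form acting by `α` on the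
first points of the pairs and by `β` on the second ones (`exists_normal_form`). The components of
`Γ(τ)` are then the cycles of `β α⁻¹` (`ccount_eq`), each contributes a factor `2n` to the Gram sum,
and the signs agree because a permutation of `k` points has sign `(-1)^{k + cyc}`. The two sums are
matched using `Wg^U(σ⁻¹) = Wg^U(σ)` (`wg_inv`).

When `k ≠ l`, multiplying `U` by a root of unity of large order scales the moment by a number
different from `1`, so the moment vanishes (`moment_eq_zero`).
-/

/-!
Weingarten calculus for classical compact Lie groups and compact symmetric spaces
(S. Matsumoto, "Weingarten calculus for matrix ensembles associated with compact
symmetric spaces"): common definitions.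

We index `{1,…,m}` by `Fin m` (0-indexed), so the pair `{2r-1, 2r}` becomes
`{2r, 2r+1}` for `r ∈ Fin k`.
-/

open MeasureTheory Finset Matrix

namespace WgPaper

/-- `lo r` is the (0-indexed) point `2r`, i.e. `2r - 1` in 1-indexed notation. -/
def lo {k : ℕ} (i : Fin k) : Fin (2 * k) := ⟨2 * (i : ℕ), by have := i.isLt; omega⟩

/-- `hi r` is the (0-indexed) point `2r + 1`, i.e. `2r` in 1-indexed notation. -/
def hi {k : ℕ} (i : Fin k) : Fin (2 * k) := ⟨2 * (i : ℕ) + 1, by have := i.isLt; omega⟩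

/-- Number of cycles of a permutation, counting fixed points as 1-cycles. -/
def cyc {m : ℕ} (σ : Equiv.Perm (Fin m)) : ℕ :=
  Multiset.card σ.cycleType + (Finset.univ.filter fun x => σ x = x).card

/-- Number of even-length cycles of a permutation. -/
def evenCycles {m : ℕ} (σ : Equiv.Perm (Fin m)) : ℕ :=
  Multiset.card (σ.cycleType.filter fun d => d % 2 = 0)

/-- Number of odd-length cycles of a permutation, counting fixed points as 1-cycles. -/
def oddCycles {m : ℕ} (σ : Equiv.Perm (Fin m)) : ℕ :=
  Multiset.card (σ.cycleType.filter fun d => d % 2 = 1)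
    + (Finset.univ.filter fun x => σ x = x).card

/-- The sign `ε(σ)` of a permutation, as an element of a commutative ring. -/
def sgn (R : Type*) [CommRing R] {m : ℕ} (σ : Equiv.Perm (Fin m)) : R :=
  ((Equiv.Perm.sign σ : ℤ) : R)

/-- Full convolution on a finite group: `(f * g)(σ) = ∑_τ f(τ) g(τ⁻¹ σ)`. -/
def conv {G : Type*} [Group G] [Fintype G] {R : Type*} [CommRing R] (f g : G → R) : G → R :=
  fun σ => ∑ τ : G, f τ * g (τ⁻¹ * σ)

/-- The Dirac function at the identity permutation. -/
def deltaId {m : ℕ} {R : Type*} [CommRing R] : Equiv.Perm (Fin m) → R :=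
  fun σ => if σ = 1 then 1 else 0

/-- The graph `Γ(σ)` on `{1,…,2k}` whose edges are `{2r-1, 2r}` and `{σ(2r-1), σ(2r)}`
(in 1-indexed notation) for `1 ≤ r ≤ k`. -/
def Gamma {k : ℕ} (σ : Equiv.Perm (Fin (2 * k))) : SimpleGraph (Fin (2 * k)) :=
  SimpleGraph.fromRel fun a b =>
    (∃ r : Fin k, a = lo r ∧ b = hi r) ∨ ∃ r : Fin k, a = σ (lo r) ∧ b = σ (hi r)

/-- `c(σ)`, the number of connected components of `Γ(σ)`. -/
noncomputable def ccount {k : ℕ} (σ : Equiv.Perm (Fin (2 * k))) : ℕ :=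
  Nat.card (Gamma σ).ConnectedComponent

/-- The number of vertices of a connected component of a graph. -/
noncomputable def compSize {V : Type*} {G : SimpleGraph V} (C : G.ConnectedComponent) : ℕ :=
  Nat.card {v // G.connectedComponentMk v = C}

/-- `ℓe(σ)`: the number of connected components of `Γ(σ)` whose size is `≡ 0 (mod 4)`. -/
noncomputable def ecomp {k : ℕ} (σ : Equiv.Perm (Fin (2 * k))) : ℕ :=
  Nat.card {C : (Gamma σ).ConnectedComponent // compSize C % 4 = 0}

/-- `ℓo(σ)`: the number of connected components of `Γ(σ)` whose size is `≡ 2 (mod 4)`. -/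
noncomputable def ocomp {k : ℕ} (σ : Equiv.Perm (Fin (2 * k))) : ℕ :=
  Nat.card {C : (Gamma σ).ConnectedComponent // compSize C % 4 = 2}

/-- Membership in the hyperoctahedral subgroup `H_k ≤ S_{2k}`: each pair
`{2i-1, 2i}` is mapped onto some pair `{2j-1, 2j}`. -/
def IsHyper {k : ℕ} (ζ : Equiv.Perm (Fin (2 * k))) : Prop :=
  ∀ i : Fin k, ∃ j : Fin k, ({ζ (lo i), ζ (hi i)} : Finset (Fin (2 * k))) = {lo j, hi j}

/-- The defining property of the set `M_{2k}` of coset representatives of `S_{2k}/H_k`: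
`σ(2i-1) < σ(2i)` for all `i` and `σ(1) < σ(3) < ⋯ < σ(2k-1)`. -/
def MProp {k : ℕ} (σ : Equiv.Perm (Fin (2 * k))) : Prop :=
  (∀ i : Fin k, σ (lo i) < σ (hi i)) ∧ ∀ i j : Fin k, i < j → σ (lo i) < σ (lo j)

open scoped Classical in
/-- The set `M_{2k}` of coset representatives of `S_{2k}/H_k`, as a `Finset`. -/
noncomputable def Mset (k : ℕ) : Finset (Equiv.Perm (Fin (2 * k))) :=
  Finset.univ.filter MProp

/-- Reduced convolution: `(f ⋆ g)(σ) = ∑_{τ ∈ M_{2k}} f(τ) g(τ⁻¹ σ)`. -/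
noncomputable def sconv {k : ℕ} {R : Type*} [CommRing R]
    (f g : Equiv.Perm (Fin (2 * k)) → R) : Equiv.Perm (Fin (2 * k)) → R :=
  fun σ => ∑ τ ∈ Mset k, f τ * g (τ⁻¹ * σ)

open scoped Classical in
/-- The indicator function `1_k` of `H_k`. -/
noncomputable def oneH {k : ℕ} {R : Type*} [CommRing R] : Equiv.Perm (Fin (2 * k)) → R :=
  fun σ => if IsHyper σ then 1 else 0

open scoped Classical in
/-- The twisted indicator function `1_k^ε` of `H_k`: `σ ↦ ε(σ)` on `H_k`, `0` elsewhere. -/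
noncomputable def oneHeps {k : ℕ} {R : Type*} [CommRing R] : Equiv.Perm (Fin (2 * k)) → R :=
  fun σ => if IsHyper σ then sgn R σ else 0

/-- `δ_σ(i,j) = ∏_{s=1}^k δ_{i_{σ(s)}, j_s}`. -/
def deltaP {k : ℕ} {α : Type*} [DecidableEq α] {R : Type*} [CommRing R]
    (σ : Equiv.Perm (Fin k)) (i j : Fin k → α) : R :=
  ∏ s : Fin k, if i (σ s) = j s then 1 else 0

/-- `Δ_σ(i) = ∏_{s=1}^k δ_{i_{σ(2s-1)}, i_{σ(2s)}}`. -/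
def DeltaO {k : ℕ} {α : Type*} [DecidableEq α] {R : Type*} [CommRing R]
    (σ : Equiv.Perm (Fin (2 * k))) (i : Fin (2 * k) → α) : R :=
  ∏ s : Fin k, if i (σ (lo s)) = i (σ (hi s)) then 1 else 0

/-- The standard skew-symmetric matrix `J_n = ((O, I_n), (−I_n, O))`. -/
def Jmat (R : Type*) [CommRing R] (n : ℕ) : Matrix (Fin (2 * n)) (Fin (2 * n)) R :=
  Matrix.of fun p q =>
    if (p : ℕ) + n = (q : ℕ) then 1 else if (q : ℕ) + n = (p : ℕ) then -1 else 0

/-- `Δ'_σ(i) = ∏_{r=1}^k ⟨i_{σ(2r-1)}, i_{σ(2r)}⟩`, where `⟨p,q⟩` is the `(p,q)` entry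
of `J_n`. -/
def DeltaSp {k n : ℕ} (R : Type*) [CommRing R]
    (σ : Equiv.Perm (Fin (2 * k))) (i : Fin (2 * k) → Fin (2 * n)) : R :=
  ∏ s : Fin k, Jmat R n (i (σ (lo s))) (i (σ (hi s)))

/-- The signature matrix `I'_{a,n-a} = diag(I_a, −I_{n-a})`, of size `n`. -/
def Iab (R : Type*) [CommRing R] (n a : ℕ) : Matrix (Fin n) (Fin n) R :=
  Matrix.of fun p q => if p = q then (if (p : ℕ) < a then 1 else -1) else 0

/-- The signature matrix `I''_{a,n-a} = diag(I_a, −I_{n-a}, I_a, −I_{n-a})`, of size `2n`. -/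
def Ippab (R : Type*) [CommRing R] (n a : ℕ) : Matrix (Fin (2 * n)) (Fin (2 * n)) R :=
  Matrix.of fun p q => if p = q then (if (p : ℕ) % n < a then 1 else -1) else 0

/-- The unitary group `U(n)` of `n × n` complex unitary matrices. -/
abbrev UG (n : ℕ) := Matrix.unitaryGroup (Fin n) ℂ

/-- The real orthogonal group `O(n)`. -/
abbrev OG (n : ℕ) := Matrix.orthogonalGroup (Fin n) ℝ

noncomputable instance (n : ℕ) : MeasurableSpace (UG n) := borel _

noncomputable instance (n : ℕ) : MeasurableSpace (OG n) := borel _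

/-- A `2n × 2n` unitary matrix lies in the compact symplectic group `Sp(2n)`
iff `S J Sᵀ = J`. -/
def IsSymplectic {n : ℕ} (S : UG (2 * n)) : Prop :=
  (S : Matrix (Fin (2 * n)) (Fin (2 * n)) ℂ) * Jmat ℂ n
    * (S : Matrix (Fin (2 * n)) (Fin (2 * n)) ℂ)ᵀ = Jmat ℂ n

/-- The function `T^{D III}_n` on `S_{2k}`:
`σ ↦ ∑_p Δ_σ(p) ∏_{r=1}^k J_{p_{2r-1}, p_{2r}}`. -/
noncomputable def TDIII (n k : ℕ) : Equiv.Perm (Fin (2 * k)) → ℝ :=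
  fun σ => ∑ p : Fin (2 * k) → Fin (2 * n),
    DeltaO σ p * ∏ r : Fin k, Jmat ℝ n (p (lo r)) (p (hi r))

/-- The function `T^{C I}_n` on `S_{2k}`:
`σ ↦ ∑_p Δ'_σ(p) ∏_{r=1}^k (J I'_{nn})_{p_{2r-1}, p_{2r}}`. -/
noncomputable def TCI (n k : ℕ) : Equiv.Perm (Fin (2 * k)) → ℂ :=
  fun σ => ∑ p : Fin (2 * k) → Fin (2 * n),
    DeltaSp ℂ σ p * ∏ r : Fin k, (Jmat ℂ n * Iab ℂ (2 * n) n) (p (lo r)) (p (hi r))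


/-! ### Cycles of a permutation as orbits -/

section Cycles

open Equiv

/-- The number of orbits of `σ`, the form in which `cyc σ` enters the counting arguments. -/
lemma cyc_eq_card_quotient {m : ℕ} (σ : Perm (Fin m)) :
    cyc σ = Nat.card (Quotient (Perm.SameCycle.setoid σ)) := by
  classical
  -- `F` sends a moved point to its cycle and a fixed point to itself; its fibres are the orbits.
  let F : Fin m → Perm (Fin m) ⊕ Fin m := fun x => if σ x = x then Sum.inr x else
    Sum.inl (σ.cycleOf x)
  have hF : Perm.SameCycle.setoid σ = Setoid.ker F := by
    ext x y
    change σ.SameCycle x y ↔ F x = F y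
    constructor
    · intro h
      by_cases hx : σ x = x
      · have : x = y := by
          obtain ⟨z, hz⟩ := h
          rw [← hz, Perm.zpow_apply_eq_self_of_apply_eq_self hx]
        rw [this]
      · have hy : ¬ σ y = y := fun hy => hx (h.apply_eq_self_iff.2 hy)
        simp only [F, hx, hy, if_false]
        rw [h.cycleOf_eq]
    · intro h
      by_cases hx : σ x = x <;> by_cases hy : σ y = y <;> simp only [F, hx, hy, if_true, if_false,
        Sum.inr.injEq, Sum.inl.injEq, reduceCtorEq] at h
      · rw [h]
      · have h1 : y ∈ (σ.cycleOf y).support := by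
          rw [Perm.mem_support_cycleOf_iff]; exact ⟨Perm.SameCycle.refl _ _, by simpa using hy⟩
        rw [← h, Perm.mem_support_cycleOf_iff] at h1
        exact h1.1
  have hr : Set.range F = ((σ.cycleFactorsFinset).disjSum
      (Finset.univ.filter fun x => σ x = x) : Finset (Perm (Fin m) ⊕ Fin m)) := by
    ext z
    simp only [Set.mem_range, Finset.mem_coe]
    constructor
    · rintro ⟨x, rfl⟩
      by_cases hx : σ x = x
      · simp [F, hx]
      · simp only [F, hx, if_false, Finset.inl_mem_disjSum]
        rw [Perm.cycleOf_mem_cycleFactorsFinset_iff]; simpa using hx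
    · rcases z with c | x
      · rw [Finset.inl_mem_disjSum]
        intro hc
        obtain ⟨x, hx⟩ := (Perm.mem_cycleFactorsFinset_iff.1 hc).1.nonempty_support
        refine ⟨x, ?_⟩
        have h1 := Perm.cycle_is_cycleOf hx hc
        have h2 : σ x ≠ x := by
          have := Perm.mem_cycleFactorsFinset_support_le hc hx
          simpa using this
        simp [F, h2, h1]
      · rw [Finset.inr_mem_disjSum]
        intro hx
        exact ⟨x, by simpa [F] using hx⟩
  rw [hF, Nat.card_congr (Setoid.quotientKerEquivRange F), hr]
  simp [cyc, Perm.cycleType_def]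

lemma cyc_eq_cycleType {m : ℕ} (σ : Perm (Fin m)) :
    cyc σ = Multiset.card σ.cycleType + (m - σ.cycleType.sum) := by
  have h := Finset.card_filter_add_card_filter_not (s := (Finset.univ : Finset (Fin m)))
    (fun x => σ x = x)
  have h2 : (Finset.univ.filter fun x => ¬ σ x = x) = σ.support := by ext; simp
  rw [h2, ← Perm.sum_cycleType, Finset.card_univ, Fintype.card_fin] at h
  unfold cyc
  omega

lemma cyc_inv {m : ℕ} (σ : Perm (Fin m)) : cyc σ⁻¹ = cyc σ := by
  simp [cyc_eq_cycleType]

lemma cyc_mul_comm {m : ℕ} (σ τ : Perm (Fin m)) : cyc (σ * τ) = cyc (τ * σ) := by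
  have : τ * σ = τ * (σ * τ) * τ⁻¹ := by group
  rw [this, cyc_eq_cycleType, cyc_eq_cycleType, Perm.cycleType_conj]

lemma sgn_eq_cyc {m : ℕ} (σ : Perm (Fin m)) : sgn ℂ σ = (-1) ^ m * (-1) ^ cyc σ := by
  have h1 := Perm.sum_cycleType_le σ
  rw [Fintype.card_fin] at h1
  have h2 : sgn ℂ σ = (-1) ^ (σ.cycleType.sum + Multiset.card σ.cycleType) := by
    rw [sgn, Perm.sign_of_cycleType]; push_cast; rfl
  rw [h2, ← pow_add, cyc_eq_cycleType]
  obtain ⟨d, hd⟩ := Nat.exists_eq_add_of_le h1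
  have e1 : m - σ.cycleType.sum = d := by omega
  have e2 : m + (Multiset.card σ.cycleType + d) =
      σ.cycleType.sum + Multiset.card σ.cycleType + 2 * d := by omega
  rw [e1, e2, pow_add _ _ (2 * d), pow_mul _ 2]
  simp

lemma sgn_mul {m : ℕ} (σ τ : Perm (Fin m)) : sgn ℂ (σ * τ) = sgn ℂ σ * sgn ℂ τ := by
  simp [sgn]

/-- Colourings `p` with `p ∘ α = p ∘ β` are those constant on the cycles of `β α⁻¹`. -/
lemma sum_colourings {m N : ℕ} (α β : Perm (Fin m)) :
    ∑ p : Fin m → Fin N, ∏ s, (if p (α s) = p (β s) then (1 : ℂ) else 0)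
      = (N : ℂ) ^ cyc (β * α⁻¹) := by
  classical
  set π := β * α⁻¹ with hπ
  have h1 : ∀ p : Fin m → Fin N, (∏ s, (if p (α s) = p (β s) then (1 : ℂ) else 0))
      = if (∀ s, p (α s) = p (β s)) then 1 else 0 := by
    intro p
    rw [Finset.prod_ite_zero]; simp
  simp only [h1, Finset.sum_boole]
  let e : {p : Fin m → Fin N // ∀ s, p (α s) = p (β s)} ≃
      (Quotient (Perm.SameCycle.setoid π) → Fin N) :=
    { toFun := fun p => Quotient.lift p.1 (by
        have h0 : ∀ x, p.1 (π x) = p.1 x := fun x => by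
          have := p.2 (α⁻¹ x); simp at this; simp [hπ, this]
        have h2 : ∀ (z : ℕ) x, p.1 ((π ^ z) x) = p.1 x := fun z => by
          induction z with
          | zero => simp
          | succ z ih => intro x; rw [pow_succ', Perm.mul_apply, h0, ih]
        rintro x y h
        obtain ⟨z, hz⟩ := (show π.SameCycle x y from h).exists_pow_eq'
        rw [← hz.2, h2])
      invFun := fun q => ⟨fun x => q (Quotient.mk _ x), fun s => by
        refine congrArg q ?_
        apply Quotient.sound
        change π.SameCycle _ _
        exact ⟨1, by simp [hπ]⟩⟩
      left_inv := fun p => by ext; rfl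
      right_inv := fun q => by
        funext x
        induction x using Quotient.inductionOn
        rfl }
  rw [← Fintype.card_subtype, ← Nat.card_eq_fintype_card, Nat.card_congr e, Nat.card_fun,
    cyc_eq_card_quotient]
  simp

end Cycles

/-! ### Normal form of a permutation relative to the pairing -/

section Pairing

open Equiv

/-- The points of `{1,…,2k}` as (pair, position in the pair): `false` is `lo`, `true` is `hi`. -/
def pairEquiv (k : ℕ) : Fin k × Bool ≃ Fin (2 * k) where
  toFun v := if v.2 then hi v.1 else lo v.1
  invFun x := (⟨(x : ℕ) / 2, by omega⟩, decide ((x : ℕ) % 2 = 1))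
  left_inv := by
    rintro ⟨r, b⟩
    cases b
    · simp [lo]
    · ext
      · simp only [hi, if_true]
        omega
      · simp [hi]
  right_inv x := by
    by_cases h : (x : ℕ) % 2 = 1
    · ext; simp [h, hi]; omega
    · ext; simp [h, lo]; omega

@[simp] lemma pairEquiv_false {k : ℕ} (r : Fin k) : pairEquiv k (r, false) = lo r := rfl

@[simp] lemma pairEquiv_true {k : ℕ} (r : Fin k) : pairEquiv k (r, true) = hi r := rfl

lemma prod_pairs {k : ℕ} {M : Type*} [CommMonoid M] (f : Fin (2 * k) → M) :
    ∏ t, f t = ∏ r : Fin k, f (lo r) * f (hi r) := by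
  rw [← (pairEquiv k).prod_comp, Fintype.prod_prod_type]
  refine Finset.prod_congr rfl fun r _ => ?_
  rw [Fintype.prod_bool, mul_comm]; rfl

/-- Two fixed-point-free involutions have a common proper 2-colouring: the union of two perfect
matchings is bipartite. The involutions act identically and freely on the orbits of their product,
because a reflection in the dihedral group they generate is conjugate to one of them. -/
lemma exists_two_colouring {A : Type*} [LinearOrder A] (a b : Perm A)
    (ha : a * a = 1) (hb : b * b = 1) (ha' : ∀ x, a x ≠ x) (hb' : ∀ x, b x ≠ x) :
    ∃ f : A → Bool, (∀ x, f (a x) = !f x) ∧ ∀ x, f (b x) = !f x := by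
  classical
  set π : Perm A := a * b with hπ
  have hai : a⁻¹ = a := inv_eq_of_mul_eq_one_left ha
  have hbi : b⁻¹ = b := inv_eq_of_mul_eq_one_left hb
  have haa : ∀ x, a (a x) = x := fun x => by rw [← Perm.mul_apply, ha]; rfl
  have hconj : a * π * a⁻¹ = π⁻¹ := by
    rw [hπ, _root_.mul_inv_rev, hai, hbi, ← mul_assoc, ha, one_mul]
  have hconjz : ∀ z : ℤ, a * π ^ z * a⁻¹ = π ^ (-z) := fun z => by
    rw [← conj_zpow, hconj, _root_.inv_zpow, _root_.zpow_neg]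
  -- no reflection `π ^ z * a` has a fixed point
  have hne : ∀ z : ℤ, ∀ x, (π ^ z) x ≠ a x := by
    intro z x h
    rcases Int.even_or_odd' z with ⟨w, rfl | rfl⟩
    · apply ha' ((π ^ w) x)
      have h1 : a * π ^ w = π ^ (-w) * a := by
        rw [← hconjz w, inv_mul_cancel_right]
      rw [← Perm.mul_apply, h1, Perm.mul_apply, ← h, ← Perm.mul_apply, ← _root_.zpow_add]
      congr 2; ring
    · apply hb' ((π ^ w) x)
      have h0 : b = a * π := by rw [hπ, ← mul_assoc, ha, one_mul]
      have h1 : a * π ^ (w + 1) = π ^ (-(w + 1)) * a := by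
        rw [← hconjz (w + 1), inv_mul_cancel_right]
      have h2 : b * π ^ w = π ^ (-(w + 1)) * a := by
        rw [← h1, h0, mul_assoc, add_comm w 1, _root_.zpow_add, zpow_one]
      rw [← Perm.mul_apply, h2, Perm.mul_apply, ← h, ← Perm.mul_apply, ← _root_.zpow_add]
      congr 2; ring
  let cls : A → Quotient (Perm.SameCycle.setoid π) := fun x => Quotient.mk _ x
  have hcls : ∀ x y, cls x = cls y ↔ π.SameCycle x y := fun x y => by
    rw [Quotient.eq]; rfl
  have hca : ∀ x y, cls x = cls y → cls (a x) = cls (a y) := by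
    intro x y h
    rw [hcls] at h ⊢
    obtain ⟨z, rfl⟩ := h
    refine ⟨-z, ?_⟩
    rw [← hconjz z]
    simp [hai, haa]
  have hcb : ∀ x, cls (b x) = cls (a x) := fun x => by
    rw [hcls]
    refine ⟨1, ?_⟩
    rw [zpow_one, hπ, Perm.mul_apply, ← Perm.mul_apply b b, hb]; rfl
  have hfree : ∀ x, (cls x).out ≠ (cls (a x)).out := by
    intro x h
    have h2 := Quotient.out_injective h
    rw [hcls] at h2
    obtain ⟨z, hz⟩ := h2
    exact hne z x hz
  have key : ∀ x, (decide ((cls (a x)).out < (cls x).out)) =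
      !(decide ((cls x).out < (cls (a x)).out)) := by
    intro x
    rcases lt_or_gt_of_ne (hfree x) with h | h
    · simp [h, h.le]
    · simp [h, h.le]
  refine ⟨fun x => decide ((cls x).out < (cls (a x)).out), fun x => ?_, fun x => ?_⟩
  · beta_reduce; rw [haa]; exact key x
  · have : cls (a (b x)) = cls x := by rw [hca _ _ (hcb x), haa]
    beta_reduce; rw [this, hcb]; exact key x

/-- The sign contributed by flipping (or not) one pair. -/
def bsgn (b : Bool) : ℂ := if b then -1 else 1

lemma exists_prodCongrLeft {A : Type*} (ρ : Perm (A × Bool)) (h : ∀ v, (ρ v).2 = v.2) :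
    ∃ σ : Bool → Perm A, ρ = prodCongrLeft σ := by
  have h' : ∀ v, (ρ⁻¹ v).2 = v.2 := fun v => by
    have := h (ρ⁻¹ v); simpa using this.symm
  have e1 : ∀ r b, ((ρ (r, b)).1, b) = ρ (r, b) := fun r b => Prod.ext rfl (h (r, b)).symm
  have e2 : ∀ r b, ((ρ⁻¹ (r, b)).1, b) = ρ⁻¹ (r, b) := fun r b => Prod.ext rfl (h' (r, b)).symm
  refine ⟨fun b => ⟨fun r => (ρ (r, b)).1, fun r => (ρ⁻¹ (r, b)).1, fun r => ?_, fun r => ?_⟩, ?_⟩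
  · simp [e1]
  · simp only [e2]; simp
  · ext ⟨r, b⟩ : 1
    exact (e1 r b).symm

/-- After flipping the pairs marked by `v` before and those marked by `u` after, `τ` maps `lo`
points to `lo` points through `α` and `hi` points to `hi` points through `β`. -/
lemma exists_normal_form {k : ℕ} (τ : Perm (Fin (2 * k))) :
    ∃ (u v : Fin k → Bool) (α β : Perm (Fin k)),
      (∀ r, τ (pairEquiv k (r, v r)) = pairEquiv k (α r, u (α r))) ∧
      (∀ r, τ (pairEquiv k (r, !v r)) = pairEquiv k (β r, !u (β r))) ∧
      sgn ℂ τ = (∏ r, bsgn (u r)) * (∏ r, bsgn (v r)) * sgn ℂ (β * α⁻¹) := by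
  classical
  let e := pairEquiv k
  let a : Perm (Fin (2 * k)) := e.permCongr (prodCongr (Equiv.refl _) Equiv.boolNot)
  have hae : ∀ r b, a (e (r, b)) = e (r, !b) := by intro r b; simp [a]
  have ha2 : a * a = 1 := by
    ext x : 1
    obtain ⟨⟨r, b⟩, rfl⟩ := e.surjective x
    simp [hae]
  have ha' : ∀ x, a x ≠ x := by
    intro x
    obtain ⟨⟨r, b⟩, rfl⟩ := e.surjective x
    rw [hae]
    intro h
    simpa using e.injective h
  obtain ⟨f, hf, hfτ⟩ := exists_two_colouring a (τ * a * τ⁻¹) ha2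
    (by rw [show τ * a * τ⁻¹ * (τ * a * τ⁻¹) = τ * (a * a) * τ⁻¹ by group, ha2]; group) ha'
    (by intro x h
        apply ha' (τ⁻¹ x)
        apply τ.injective
        simpa using h)
  have hf2 : ∀ r b, f (e (r, b)) = xor b (f (lo r)) := by
    intro r b
    cases b
    · simp [e]
    · have := hf (e (r, false))
      rw [hae] at this
      simpa [e] using this
  have hf3 : ∀ r b, f (τ (e (r, b))) = xor b (f (τ (lo r))) := by
    intro r b
    cases b
    · simp [e]
    · have := hfτ (τ (e (r, false)))
      simp only [Perm.mul_apply, Perm.coe_inv, Equiv.symm_apply_apply, hae] at this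
      simpa [e] using this
  let fl : Bool → Perm Bool := fun b => if b then Equiv.boolNot else 1
  have hfl : ∀ b c, fl b c = xor c b := by intro b c; cases b <;> cases c <;> rfl
  have hfls : ∀ b, ((Perm.sign (fl b) : ℤ) : ℂ) = bsgn b := by
    intro b
    cases b
    · simp [fl, bsgn]
    · have : Perm.sign Equiv.boolNot = -1 := by decide
      simp [fl, bsgn, this]
  let h0 : Perm (Fin k × Bool) := prodCongrRight fun r => fl (f (lo r))
  let h1 : Perm (Fin k × Bool) := prodCongrRight fun r => fl (f (τ (lo r)))
  have hh0 : ∀ r b, h0 (r, b) = (r, xor b (f (lo r))) := by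
    intro r b; simp [h0, prodCongrRight, hfl]
  have hh1 : ∀ r b, h1 (r, b) = (r, xor b (f (τ (lo r)))) := by
    intro r b; simp [h1, prodCongrRight, hfl]
  let ρ : Perm (Fin k × Bool) := h0⁻¹ * e.symm.permCongr τ * h1
  have hρ : ∀ v, e (h0 (ρ v)) = τ (e (h1 v)) := by intro v; simp [ρ]
  have hfh0 : ∀ v, f (e (h0 v)) = v.2 := by
    rintro ⟨r, b⟩; rw [hh0, hf2]; simp
  have hfh1 : ∀ v, f (τ (e (h1 v))) = v.2 := by
    rintro ⟨r, b⟩; rw [hh1, hf3]; simp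
  obtain ⟨σ, hσ⟩ := exists_prodCongrLeft ρ (fun v => by rw [← hfh0, hρ, hfh1])
  refine ⟨fun r => f (lo r), fun r => f (τ (lo r)), σ false, σ true, fun r => ?_, fun r => ?_, ?_⟩
  · have := hρ (r, false)
    rw [hσ, hh1] at this
    simp only [prodCongrLeft_apply, hh0] at this
    simpa using this.symm
  · have := hρ (r, true)
    rw [hσ, hh1] at this
    simp only [prodCongrLeft_apply, hh0] at this
    simpa using this.symm
  · have hs : Perm.sign ρ = Perm.sign h0 * Perm.sign τ * Perm.sign h1 := by
      simp only [ρ, Perm.sign_mul, Perm.sign_inv, Perm.sign_permCongr]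
    rw [hσ, Perm.sign_prodCongrLeft, Fintype.prod_bool] at hs
    have hs2 : Perm.sign τ = Perm.sign h0 * Perm.sign h1 *
        (Perm.sign (σ true) * Perm.sign (σ false)) := by
      rw [hs]
      rcases Int.units_eq_one_or (Perm.sign h0) with h | h <;>
      rcases Int.units_eq_one_or (Perm.sign h1) with h' | h' <;> simp [h, h']
    rw [sgn, hs2, sgn, Perm.sign_mul, Perm.sign_inv]
    simp only [h0, h1, Perm.sign_prodCongrRight]
    push_cast
    simp only [hfls]

end Pairing

/-! ### The symplectic Gram function -/

section Symplectic

open Equiv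

/-- The index `x'` paired with `x` by `J`: the only column of row `x` with a nonzero entry. -/
def Jbar {n : ℕ} (x : Fin (2 * n)) : Fin (2 * n) :=
  if h : (x : ℕ) < n then ⟨x + n, by omega⟩ else ⟨x - n, by omega⟩

/-- The sign of the nonzero entry of `J` in row `x`. -/
def Jsgn {n : ℕ} (x : Fin (2 * n)) : ℂ := if (x : ℕ) < n then 1 else -1

lemma Jmat_eq {n : ℕ} (x y : Fin (2 * n)) :
    Jmat ℂ n x y = Jsgn x * if y = Jbar x then 1 else 0 := by
  have hx := x.2
  have hy := y.2
  simp only [Jmat, Matrix.of_apply, Jsgn, Jbar]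
  by_cases h : (x : ℕ) < n
  · simp only [h, dif_pos, Fin.ext_iff, if_true]
    have h2 : ¬ ((y : ℕ) + n = x) := by omega
    simp [h2, eq_comm]
  · simp only [h, dif_neg, Fin.ext_iff, if_false, not_false_eq_true]
    have h2 : ¬ ((x : ℕ) + n = y) := by omega
    have h3 : ((y : ℕ) + n = x) ↔ ((y : ℕ) = x - n) := by omega
    simp [h2, h3]

lemma Jmat_antisymm {n : ℕ} (x y : Fin (2 * n)) : Jmat ℂ n x y = - Jmat ℂ n y x := by
  have hx := x.2
  have hy := y.2
  simp only [Jmat, Matrix.of_apply]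
  by_cases h1 : (x : ℕ) + n = y
  · have h2 : ¬ ((y : ℕ) + n = x) := by omega
    simp [h1, h2]
  · by_cases h2 : (y : ℕ) + n = x <;> simp [h1, h2]

lemma Jbar_injective {n : ℕ} : Function.Injective (Jbar : Fin (2 * n) → Fin (2 * n)) := by
  intro x y h
  have hx := x.2
  have hy := y.2
  simp only [Jbar] at h
  ext
  split_ifs at h <;> simp only [Fin.mk.injEq] at h <;> omega

lemma Jsgn_mul_self {n : ℕ} (x : Fin (2 * n)) : Jsgn x * Jsgn x = 1 := by
  simp only [Jsgn]; split_ifs <;> norm_num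

lemma Jmat_flip {n k : ℕ} (p : Fin (2 * k) → Fin (2 * n)) (r : Fin k) (b : Bool) :
    Jmat ℂ n (p (lo r)) (p (hi r)) =
      bsgn b * Jmat ℂ n (p (pairEquiv k (r, b))) (p (pairEquiv k (r, !b))) := by
  cases b
  · simp [bsgn]
  · rw [Jmat_antisymm]; simp [bsgn]

/-- Components of `Γ(τ)` are the cycles of `β α⁻¹` for a normal form of `τ`: contract the edges
joining the two points of a pair. -/
lemma ccount_eq {k : ℕ} (τ : Perm (Fin (2 * k))) (u v : Fin k → Bool) (α β : Perm (Fin k))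
    (h1 : ∀ r, τ (pairEquiv k (r, v r)) = pairEquiv k (α r, u (α r)))
    (h2 : ∀ r, τ (pairEquiv k (r, !v r)) = pairEquiv k (β r, !u (β r))) :
    ccount τ = cyc (β * α⁻¹) := by
  rw [ccount, cyc_eq_card_quotient]
  set π := β * α⁻¹ with hπ
  have hsc : ∀ r, π.SameCycle (α r) (β r) := fun r => ⟨1, by simp [hπ]⟩
  let φ : Fin (2 * k) → Fin k := fun x => ((pairEquiv k).symm x).1
  have hφ : ∀ r b, φ (pairEquiv k (r, b)) = r := fun r b => by simp [φ]
  have hφτ : ∀ r, π.SameCycle (φ (τ (lo r))) (φ (τ (hi r))) := by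
    intro r
    have e1 := h1 r
    have e2 := h2 r
    cases hv : v r
    · rw [hv] at e1 e2
      simp only [Bool.not_false, pairEquiv_false, pairEquiv_true] at e1 e2
      rw [e1, e2, hφ, hφ]; exact hsc r
    · rw [hv] at e1 e2
      simp only [Bool.not_true, pairEquiv_false, pairEquiv_true] at e1 e2
      rw [e1, e2, hφ, hφ]; exact (hsc r).symm
  have hadj : ∀ x y, (Gamma τ).Adj x y → π.SameCycle (φ x) (φ y) := by
    have aux : ∀ x y, ((∃ r : Fin k, x = lo r ∧ y = hi r) ∨
        ∃ r : Fin k, x = τ (lo r) ∧ y = τ (hi r)) → π.SameCycle (φ x) (φ y) := by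
      rintro x y (⟨r, rfl, rfl⟩ | ⟨r, rfl, rfl⟩)
      · have e1 := hφ r false
        have e2 := hφ r true
        rw [pairEquiv_false] at e1
        rw [pairEquiv_true] at e2
        rw [e1, e2]
      · exact hφτ r
    intro x y h
    rw [Gamma, SimpleGraph.fromRel_adj] at h
    rcases h.2 with h | h
    · exact aux x y h
    · exact (aux y x h).symm
  have hreach : ∀ x y, (Gamma τ).Reachable x y → π.SameCycle (φ x) (φ y) := by
    rintro x y ⟨w⟩
    induction w with
    | nil => exact Perm.SameCycle.refl _ _
    | cons h _ ih => exact (hadj _ _ h).trans ih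
  have hpair : ∀ r b c, (Gamma τ).Reachable (pairEquiv k (r, b)) (pairEquiv k (r, c)) := by
    have aux : ∀ r, (Gamma τ).Reachable (lo r) (hi r) := fun r => by
      apply SimpleGraph.Adj.reachable
      rw [Gamma, SimpleGraph.fromRel_adj]
      exact ⟨by simp [lo, hi], Or.inl (Or.inl ⟨r, rfl, rfl⟩)⟩
    intro r b c
    cases b <;> cases c
    · rfl
    · exact aux r
    · exact (aux r).symm
    · rfl
  have hτpair : ∀ r b c, (Gamma τ).Reachable (τ (pairEquiv k (r, b))) (τ (pairEquiv k (r, c))) := by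
    have aux : ∀ r, (Gamma τ).Reachable (τ (lo r)) (τ (hi r)) := fun r => by
      apply SimpleGraph.Adj.reachable
      rw [Gamma, SimpleGraph.fromRel_adj]
      exact ⟨by simp [lo, hi], Or.inl (Or.inr ⟨r, rfl, rfl⟩)⟩
    intro r b c
    cases b <;> cases c
    · rfl
    · exact aux r
    · exact (aux r).symm
    · rfl
  have hstep : ∀ s, (Gamma τ).Reachable (lo s) (lo (π s)) := by
    intro s
    obtain ⟨r, rfl⟩ := α.surjective s
    have e : π (α r) = β r := by simp [hπ]
    rw [e]
    have g1 := hpair (α r) false (u (α r))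
    have g2 := hτpair r (v r) (!v r)
    have g3 := hpair (β r) (!u (β r)) false
    rw [h1, h2] at g2
    exact (g1.trans g2).trans g3
  have hsteps : ∀ (z : ℕ) s, (Gamma τ).Reachable (lo s) (lo ((π ^ z) s)) := by
    intro z
    induction z with
    | zero => intro s; rfl
    | succ z ih => intro s; rw [pow_succ', Perm.mul_apply]; exact (ih s).trans (hstep _)
  have hcyc : ∀ s t, π.SameCycle s t → (Gamma τ).Reachable (lo s) (lo t) := by
    intro s t h
    obtain ⟨z, -, hz⟩ := h.exists_pow_eq'
    rw [← hz]; exact hsteps z s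
  refine Nat.card_congr
    { toFun := fun C => C.lift (fun x => (Quotient.mk (Perm.SameCycle.setoid π) (φ x)))
        (fun x y w _ => Quotient.sound (hreach x y ⟨w⟩))
      invFun := fun q => Quotient.lift (fun s => (Gamma τ).connectedComponentMk (lo s))
        (fun s t h => SimpleGraph.ConnectedComponent.sound (hcyc s t h)) q
      left_inv := ?_
      right_inv := ?_ }
  · intro C
    induction C using SimpleGraph.ConnectedComponent.ind with
    | _ x =>
      apply SimpleGraph.ConnectedComponent.sound
      obtain ⟨⟨r, b⟩, rfl⟩ := (pairEquiv k).surjective x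
      rw [hφ]
      exact hpair r false b
  · intro q
    induction q using Quotient.inductionOn with
    | _ s =>
      change Quotient.mk _ (φ (lo s)) = _
      rw [← pairEquiv_false, hφ]

/-- `T^Sp` is the Gram function of the invariant tensors: pairing the `J`-contraction with its
`τ`-permuted copy. -/
lemma sum_J_eq {n k : ℕ} (τ : Perm (Fin (2 * k))) :
    ∑ p : Fin (2 * k) → Fin (2 * n), (∏ r : Fin k, Jmat ℂ n (p (lo r)) (p (hi r))) *
        ∏ r : Fin k, Jmat ℂ n (p (τ (lo r))) (p (τ (hi r)))
      = (-1 : ℂ) ^ k * sgn ℂ τ * (-(2 * (n : ℂ))) ^ ccount τ := by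
  obtain ⟨u, v, α, β, h1, h2, h3⟩ := exists_normal_form τ
  have e1 : ∀ p : Fin (2 * k) → Fin (2 * n), (∏ r : Fin k, Jmat ℂ n (p (lo r)) (p (hi r))) =
      (∏ r, bsgn (u r)) * ∏ r : Fin k, Jmat ℂ n (p (pairEquiv k (r, u r)))
        (p (pairEquiv k (r, !u r))) := fun p => by
    rw [← Finset.prod_mul_distrib]
    exact Finset.prod_congr rfl fun r _ => Jmat_flip p r (u r)
  have e2 : ∀ p : Fin (2 * k) → Fin (2 * n),
      (∏ r : Fin k, Jmat ℂ n (p (τ (lo r))) (p (τ (hi r)))) =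
      (∏ r, bsgn (v r)) * ∏ r : Fin k, Jmat ℂ n (p (pairEquiv k (α r, u (α r))))
        (p (pairEquiv k (β r, !u (β r)))) := fun p => by
    rw [← Finset.prod_mul_distrib]
    refine Finset.prod_congr rfl fun r _ => ?_
    rw [← h1, ← h2]
    exact Jmat_flip (fun x => p (τ x)) r (v r)
  -- coordinates: `x` collects the colours of the points `(r, u r)`, `y` those of `(r, !u r)`
  let E : ((Fin k → Fin (2 * n)) × (Fin k → Fin (2 * n))) ≃ (Fin (2 * k) → Fin (2 * n)) :=
    { toFun := fun xy t => let w := (pairEquiv k).symm t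
        if w.2 = u w.1 then xy.1 w.1 else xy.2 w.1
      invFun := fun p => (fun r => p (pairEquiv k (r, u r)), fun r => p (pairEquiv k (r, !u r)))
      left_inv := fun xy => by ext <;> simp
      right_inv := fun p => by
        funext t
        obtain ⟨⟨r, b⟩, rfl⟩ := (pairEquiv k).surjective t
        by_cases hb : b = u r
        · simp [hb]
        · have : b = !u r := by cases b <;> cases h : u r <;> simp_all
          simp [this] }
  have E1 : ∀ x y r, E (x, y) (pairEquiv k (r, u r)) = x r := fun x y r => by simp [E]
  have E2 : ∀ x y r, E (x, y) (pairEquiv k (r, !u r)) = y r := fun x y r => by simp [E]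
  have key : ∑ p : Fin (2 * k) → Fin (2 * n), (∏ r : Fin k, Jmat ℂ n (p (pairEquiv k (r, u r)))
        (p (pairEquiv k (r, !u r)))) * (∏ r : Fin k, Jmat ℂ n (p (pairEquiv k (α r, u (α r))))
        (p (pairEquiv k (β r, !u (β r))))) = ((2 * n : ℕ) : ℂ) ^ cyc (β * α⁻¹) := by
    rw [← E.sum_comp, Fintype.sum_prod_type, ← sum_colourings]
    refine Finset.sum_congr rfl fun x _ => ?_
    simp only [E1, E2, Jmat_eq, Finset.prod_mul_distrib]
    have s1 : (∏ r, Jsgn (x r)) * (∏ r, Jsgn (x (α r))) = 1 := by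
      rw [Equiv.prod_comp α (fun r => Jsgn (x r)), ← Finset.prod_mul_distrib]
      exact Finset.prod_eq_one fun r _ => Jsgn_mul_self _
    -- the first family of constraints forces `y = x'`
    rw [Finset.sum_eq_single (fun r => Jbar (x r))]
    · simp only [if_true, Finset.prod_const_one, mul_one, Jbar_injective.eq_iff]
      rw [← mul_assoc, s1, one_mul]
      exact Finset.prod_congr rfl fun r _ => by simp only [eq_comm]
    · intro y _ hy
      obtain ⟨r, hr⟩ := Function.ne_iff.1 hy
      have : (∏ r, if y r = Jbar (x r) then (1 : ℂ) else 0) = 0 :=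
        Finset.prod_eq_zero (Finset.mem_univ r) (by simp [hr])
      rw [this]; ring
    · simp
  have e3 : ∀ p : Fin (2 * k) → Fin (2 * n), (∏ r : Fin k, Jmat ℂ n (p (lo r)) (p (hi r))) *
        (∏ r : Fin k, Jmat ℂ n (p (τ (lo r))) (p (τ (hi r)))) =
      ((∏ r, bsgn (u r)) * (∏ r, bsgn (v r))) *
      ((∏ r : Fin k, Jmat ℂ n (p (pairEquiv k (r, u r)))
        (p (pairEquiv k (r, !u r)))) * (∏ r : Fin k, Jmat ℂ n (p (pairEquiv k (α r, u (α r))))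
        (p (pairEquiv k (β r, !u (β r)))))) := fun p => by
    rw [e1, e2]; ring
  simp only [e3]
  rw [← Finset.mul_sum, key, h3, ccount_eq τ u v α β h1 h2, sgn_eq_cyc, neg_pow (2 * (n : ℂ))]
  have q1 : ((-1 : ℂ) ^ k) * (-1) ^ k = 1 := by rw [← mul_pow]; simp
  have q2 : ((-1 : ℂ) ^ cyc (β * α⁻¹)) * (-1) ^ cyc (β * α⁻¹) = 1 := by rw [← mul_pow]; simp
  push_cast
  linear_combination (-((∏ r, bsgn (u r)) * (∏ r, bsgn (v r)) * (2 * (n : ℂ)) ^ cyc (β * α⁻¹)))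
    * (((-1 : ℂ) ^ cyc (β * α⁻¹)) * (-1) ^ cyc (β * α⁻¹)) * q1
    - ((∏ r, bsgn (u r)) * (∏ r, bsgn (v r)) * (2 * (n : ℂ)) ^ cyc (β * α⁻¹)) * q2

end Symplectic

/-! ### The commutant of the tensor power representation -/

section Commutant

open Equiv

/-- The `K`-th tensor power of a matrix, in the basis of multi-indices. -/
def tpow {N : ℕ} (K : ℕ) (A : Matrix (Fin N) (Fin N) ℂ) :
    Matrix (Fin K → Fin N) (Fin K → Fin N) ℂ :=
  Matrix.of fun p q => ∏ s, A (p s) (q s)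

lemma tpow_apply {N K : ℕ} (A : Matrix (Fin N) (Fin N) ℂ) (p q : Fin K → Fin N) :
    tpow K A p q = ∏ s, A (p s) (q s) := rfl

lemma tpow_mul {N K : ℕ} (A B : Matrix (Fin N) (Fin N) ℂ) :
    tpow K (A * B) = tpow K A * tpow K B := by
  ext p q
  simp only [tpow_apply, Matrix.mul_apply, Finset.prod_univ_sum, Fintype.piFinset_univ,
    Finset.prod_mul_distrib]

lemma tpow_diagonal {N K : ℕ} (d : Fin N → ℂ) :
    tpow K (Matrix.diagonal d) = Matrix.diagonal fun p : Fin K → Fin N => ∏ s, d (p s) := by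
  ext p q
  rw [tpow_apply]
  by_cases h : p = q
  · subst h; simp
  · obtain ⟨s, hs⟩ := Function.ne_iff.1 h
    rw [Matrix.diagonal_apply_ne _ h]
    exact Finset.prod_eq_zero (Finset.mem_univ s) (Matrix.diagonal_apply_ne _ hs)

lemma tpow_one {N K : ℕ} : tpow K (1 : Matrix (Fin N) (Fin N) ℂ) = 1 := by
  rw [← Matrix.diagonal_one, tpow_diagonal]; simp

lemma tpow_conjTranspose {N K : ℕ} (A : Matrix (Fin N) (Fin N) ℂ) :
    tpow K Aᴴ = (tpow K A)ᴴ := by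
  ext p q
  simp [tpow_apply, Matrix.conjTranspose_apply]

/-- An operator commuting with the diagonal unitaries preserves weights: its nonzero entries join
multi-indices that are rearrangements of each other. -/
lemma exists_perm_of_ne_zero {N K : ℕ} (X : Matrix (Fin K → Fin N) (Fin K → Fin N) ℂ)
    (hX : ∀ g ∈ Matrix.unitaryGroup (Fin N) ℂ, Commute X (tpow K g))
    (p q : Fin K → Fin N) (h : X p q ≠ 0) : ∃ σ : Perm (Fin K), ∀ s, q (σ s) = p s := by
  classical
  -- a root of unity of order `K + 1` separates the possible multiplicities `0, …, K`
  obtain ⟨z, hz⟩ : ∃ z : ℂ, IsPrimitiveRoot z (K + 1) :=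
    ⟨_, Complex.isPrimitiveRoot_exp (K + 1) (by omega)⟩
  have hnorm : ‖z‖ = 1 := hz.norm'_eq_one (by omega)
  have hcard : ∀ a : Fin N, Fintype.card {s // p s = a} = Fintype.card {s // q s = a} := by
    intro a
    let d : Fin N → ℂ := fun b => if b = a then z else 1
    have hd : Matrix.diagonal d ∈ Matrix.unitaryGroup (Fin N) ℂ := by
      rw [Matrix.mem_unitaryGroup_iff, Matrix.star_eq_conjTranspose,
        Matrix.diagonal_conjTranspose, Matrix.diagonal_mul_diagonal, ← Matrix.diagonal_one]
      congr 1
      funext b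
      by_cases hb : b = a
      · simp only [d, hb, if_true, Pi.star_apply, RCLike.star_def, Complex.mul_conj,
          Complex.normSq_eq_norm_sq, hnorm]; norm_num
      · simp [d, hb]
    have h1 := congrFun (congrFun (hX _ hd).eq p) q
    rw [tpow_diagonal, Matrix.mul_diagonal, Matrix.diagonal_mul, mul_comm] at h1
    have h2 := mul_right_cancel₀ h h1
    have h3 : ∀ r : Fin K → Fin N, ∏ s, d (r s) = z ^ Fintype.card {s // r s = a} := by
      intro r
      simp only [d]
      rw [Finset.prod_ite, Finset.prod_const, Finset.prod_const_one, mul_one,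
        Fintype.card_subtype]
    rw [h3, h3] at h2
    have hle : ∀ r : Fin K → Fin N, Fintype.card {s // r s = a} < K + 1 := fun r => by
      have := Fintype.card_subtype_le (fun s => r s = a)
      rw [Fintype.card_fin] at this
      omega
    exact (hz.pow_inj (hle q) (hle p) h2).symm
  refine ⟨Equiv.ofFiberEquiv (f := p) (g := q) fun a => Fintype.equivOfCardEq (hcard a), ?_⟩
  intro s
  exact Equiv.ofFiberEquiv_map _ s

/-- Unitarian trick: an operator commuting with the tensor powers of unitaries commutes with all
tensor powers. Diagonalisation gives the Hermitian matrices, and `A = H₁ + i H₂` is reached from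
the Hermitian matrices `H₁ + t H₂`, `t` real, since the commutation relation is polynomial in
`t`. -/
lemma commute_tpow {N K : ℕ} (X : Matrix (Fin K → Fin N) (Fin K → Fin N) ℂ)
    (hX : ∀ g ∈ Matrix.unitaryGroup (Fin N) ℂ, Commute X (tpow K g))
    (A : Matrix (Fin N) (Fin N) ℂ) : Commute X (tpow K A) := by
  have hdiag : ∀ d : Fin N → ℂ, Commute X (tpow K (Matrix.diagonal d)) := by
    intro d
    rw [tpow_diagonal]
    ext p q
    rw [Matrix.mul_diagonal, Matrix.diagonal_mul]
    by_cases h : X p q = 0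
    · simp [h]
    · obtain ⟨σ, hσ⟩ := exists_perm_of_ne_zero X hX p q h
      have : ∏ s, d (q s) = ∏ s, d (p s) := by
        rw [← Equiv.prod_comp σ (fun s => d (q s))]
        exact Finset.prod_congr rfl fun s _ => by rw [hσ]
      rw [this, mul_comm]
  have hherm : ∀ H : Matrix (Fin N) (Fin N) ℂ, H.IsHermitian → Commute X (tpow K H) := by
    intro H hH
    rw [hH.spectral_theorem, Unitary.conjStarAlgAut_apply, tpow_mul, tpow_mul]
    exact ((hX _ hH.eigenvectorUnitary.2).mul_right (hdiag _)).mul_right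
      (hX _ (star hH.eigenvectorUnitary).2)
  set H₁ : Matrix (Fin N) (Fin N) ℂ := (1 / 2 : ℂ) • (A + Aᴴ) with hH₁
  set H₂ : Matrix (Fin N) (Fin N) ℂ := (-Complex.I / 2) • (A - Aᴴ) with hH₂
  have h1 : H₁.IsHermitian := by
    rw [Matrix.IsHermitian, hH₁, Matrix.conjTranspose_smul, Matrix.conjTranspose_add,
      Matrix.conjTranspose_conjTranspose, add_comm Aᴴ]
    congr 1
    simp
  have h2 : H₂.IsHermitian := by
    rw [Matrix.IsHermitian, hH₂, Matrix.conjTranspose_smul, Matrix.conjTranspose_sub,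
      Matrix.conjTranspose_conjTranspose, ← neg_sub A, smul_neg, ← neg_smul]
    congr 1
    simp [neg_div]
  have hA : A = H₁ + Complex.I • H₂ := by
    ext a b
    simp only [hH₁, hH₂, Matrix.add_apply, Matrix.smul_apply, Matrix.sub_apply, smul_eq_mul]
    linear_combination ((A a b - Aᴴ a b) / 2) * Complex.I_mul_I
  ext p q
  let P : Polynomial ℂ := ∑ r, Polynomial.C (X p r) *
    ∏ s, (Polynomial.C (H₁ (r s) (q s)) + Polynomial.X * Polynomial.C (H₂ (r s) (q s)))
  let Q : Polynomial ℂ := ∑ r,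
    (∏ s, (Polynomial.C (H₁ (p s) (r s)) + Polynomial.X * Polynomial.C (H₂ (p s) (r s)))) *
      Polynomial.C (X r q)
  have hP : ∀ t : ℂ, P.eval t = (X * tpow K (H₁ + t • H₂)) p q := by
    intro t
    simp [P, Matrix.mul_apply, tpow_apply, Polynomial.eval_finsetSum, Polynomial.eval_prod,
      mul_comm t]
  have hQ : ∀ t : ℂ, Q.eval t = (tpow K (H₁ + t • H₂) * X) p q := by
    intro t
    simp [Q, Matrix.mul_apply, tpow_apply, Polynomial.eval_finsetSum, Polynomial.eval_prod,
      mul_comm t]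
  have hPQ : P = Q := by
    apply Polynomial.eq_of_infinite_eval_eq
    refine Set.Infinite.mono ?_ (Set.infinite_range_of_injective Complex.ofReal_injective)
    rintro _ ⟨t, rfl⟩
    have ht : (H₁ + (t : ℂ) • H₂).IsHermitian := by
      refine h1.add ?_
      rw [Matrix.IsHermitian, Matrix.conjTranspose_smul, h2.eq]
      simp
    change P.eval _ = Q.eval _
    rw [hP, hQ, (hherm _ ht).eq]
  rw [hA, ← hP, ← hQ, hPQ]

/-- First fundamental theorem in the stable range `K ≤ N`: the commutant of the tensor power
representation is spanned by permutations of the factors. The operator is determined by its value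
on `e_1 ⊗ ⋯ ⊗ e_K`, which some tensor power maps to any given basis vector. -/
lemma exists_perm_coeff {N K : ℕ} (hK : K ≤ N)
    (X : Matrix (Fin K → Fin N) (Fin K → Fin N) ℂ)
    (hX : ∀ g ∈ Matrix.unitaryGroup (Fin N) ℂ, Commute X (tpow K g)) :
    ∃ c : Perm (Fin K) → ℂ, ∀ p q, X p q = ∑ τ, c τ * deltaP τ p q := by
  classical
  let q₀ : Fin K → Fin N := Fin.castLE hK
  refine ⟨fun τ => X (fun s => q₀ (τ⁻¹ s)) q₀, fun p q => ?_⟩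
  let A : Matrix (Fin N) (Fin N) ℂ := Matrix.of fun a b =>
    if h : (b : ℕ) < K then (if a = q ⟨b, h⟩ then 1 else 0) else 0
  have hA : ∀ a t, A a (q₀ t) = if a = q t then 1 else 0 := fun a t => by simp [A, q₀]
  have hcomm := congrFun (congrFun (commute_tpow X hX A).eq p) q₀
  have hl : (X * tpow K A) p q₀ = X p q := by
    rw [Matrix.mul_apply, Finset.sum_eq_single q]
    · simp [tpow_apply, hA]
    · intro r _ hr
      obtain ⟨s, hs⟩ := Function.ne_iff.1 hr
      rw [tpow_apply, Finset.prod_eq_zero (Finset.mem_univ s) (by rw [hA, if_neg hs]), mul_zero]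
    · simp
  rw [← hl, hcomm, Matrix.mul_apply]
  symm
  refine Fintype.sum_of_injective (fun τ : Perm (Fin K) => fun s => q₀ (τ⁻¹ s)) ?_ _ _ ?_ ?_
  · intro σ τ h
    apply inv_injective
    ext s : 1
    exact Fin.castLE_injective hK (congrFun h s)
  · intro r hr
    by_cases h : X r q₀ = 0
    · rw [h, mul_zero]
    · obtain ⟨σ, hσ⟩ := exists_perm_of_ne_zero X hX r q₀ h
      exact absurd ⟨σ⁻¹, funext fun s => by simpa using hσ s⟩ hr
  · intro τ
    rw [mul_comm, tpow_apply, deltaP]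
    congr 1
    simp only [hA]
    refine Eq.trans ?_ (Equiv.prod_comp τ _)
    simp

end Commutant

/-! ### Convolution and the Weingarten function -/

section Convolution

variable {G : Type*} [Group G] [Fintype G]

lemma conv_assoc (f g h : G → ℂ) : conv (conv f g) h = conv f (conv g h) := by
  funext σ
  simp only [conv, Finset.sum_mul, Finset.mul_sum]
  rw [Finset.sum_comm]
  refine Finset.sum_congr rfl fun ρ _ => ?_
  rw [← Equiv.sum_comp (Equiv.mulLeft ρ)]
  refine Finset.sum_congr rfl fun τ _ => ?_
  simp [mul_assoc]

lemma conv_deltaId {m : ℕ} (f : Equiv.Perm (Fin m) → ℂ) : conv f deltaId = f := by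
  funext σ
  simp only [conv, deltaId]
  rw [Finset.sum_eq_single σ]
  · simp
  · intro τ _ h
    rw [if_neg, mul_zero]
    intro h'
    exact h (inv_mul_eq_one.1 h')
  · simp

lemma deltaId_conv {m : ℕ} (f : Equiv.Perm (Fin m) → ℂ) : conv deltaId f = f := by
  funext σ
  simp only [conv, deltaId]
  rw [Finset.sum_eq_single 1]
  · simp
  · intro τ _ h
    simp [h]
  · simp

/-- The Weingarten function inherits `W σ⁻¹ = W σ` from `cyc`, by uniqueness of inverses. -/
lemma wg_inv {m : ℕ} (N : ℂ) (W : Equiv.Perm (Fin m) → ℂ)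
    (hW : conv (fun σ => N ^ cyc σ) W = deltaId) (σ : Equiv.Perm (Fin m)) : W σ⁻¹ = W σ := by
  have h1 : conv (fun σ => W σ⁻¹) (fun σ => N ^ cyc σ) = deltaId := by
    funext σ
    have h := congrFun hW σ⁻¹
    have hd : (deltaId σ⁻¹ : ℂ) = deltaId σ := by simp [deltaId]
    rw [← hd, ← h]
    simp only [conv]
    symm
    rw [← Equiv.sum_comp (Equiv.mulLeft σ⁻¹)]
    refine Finset.sum_congr rfl fun τ _ => ?_
    rw [Equiv.coe_mulLeft, ← cyc_inv, mul_comm]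
    congr 2
    group
  have h2 : (fun σ => W σ⁻¹) = W := by
    rw [← conv_deltaId (fun σ => W σ⁻¹), ← hW, ← conv_assoc, h1, deltaId_conv]
  exact congrFun h2 σ

end Convolution

/-! ### Haar integration -/

section Haar

open Equiv

instance (n : ℕ) : BorelSpace (UG n) := ⟨rfl⟩

lemma integral_left_translate {N : ℕ} (μ : Measure (UG N))
    (hμ : ∀ g : UG N, μ.map (fun x => g * x) = μ) (g : UG N) (f : UG N → ℂ) :
    ∫ U, f (g * U) ∂μ = ∫ U, f U ∂μ := by
  have : μ.IsMulLeftInvariant := ⟨hμ⟩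
  exact integral_mul_left_eq_self f g

lemma continuous_tpow {N K : ℕ} (p i : Fin K → Fin N) :
    Continuous fun U : UG N => tpow K (U : Matrix (Fin N) (Fin N) ℂ) p i := by
  simp only [tpow_apply]
  refine continuous_finsetProd _ fun s _ => ?_
  exact (continuous_subtype_val).matrix_elem _ _

lemma norm_tpow_le {N K : ℕ} (p i : Fin K → Fin N) (U : UG N) :
    ‖tpow K (U : Matrix (Fin N) (Fin N) ℂ) p i‖ ≤ 1 := by
  rw [tpow_apply, norm_prod]
  exact Finset.prod_le_one (fun _ _ => norm_nonneg _) fun s _ => entry_norm_bound_of_unitary U.2 _ _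

lemma integrable_tpow {N K L : ℕ} (μ : Measure (UG N)) [IsProbabilityMeasure μ]
    (p i : Fin K → Fin N) (q j : Fin L → Fin N) :
    Integrable (fun U : UG N => tpow K (U : Matrix (Fin N) (Fin N) ℂ) p i *
      star (tpow L (U : Matrix (Fin N) (Fin N) ℂ) q j)) μ := by
  refine Integrable.of_bound (C := 1) ?_ ?_
  · exact ((continuous_tpow p i).mul (continuous_tpow q j).star).aestronglyMeasurable
  · refine Filter.Eventually.of_forall fun U => ?_
    rw [norm_mul, norm_star]
    exact mul_le_one₀ (norm_tpow_le p i U) (norm_nonneg _) (norm_tpow_le q j U)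

/-- The moments `E[∏ u_{p_s i_s} conj ∏ u_{q_s j_s}]` for fixed columns `i, j`, as an operator on
the tensor power indexed by the rows `p, q`. -/
noncomputable def momentMatrix {N K : ℕ} (μ : Measure (UG N)) (i j : Fin K → Fin N) :
    Matrix (Fin K → Fin N) (Fin K → Fin N) ℂ :=
  Matrix.of fun p q => ∫ U : UG N, tpow K (U : Matrix (Fin N) (Fin N) ℂ) p i *
      star (tpow K (U : Matrix (Fin N) (Fin N) ℂ) q j) ∂μ

lemma momentMatrix_commute {N K : ℕ} (μ : Measure (UG N)) [IsProbabilityMeasure μ]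
    (hμ : ∀ g : UG N, μ.map (fun x => g * x) = μ) (i j : Fin K → Fin N)
    (g : Matrix (Fin N) (Fin N) ℂ) (hg : g ∈ Matrix.unitaryGroup (Fin N) ℂ) :
    Commute (momentMatrix μ i j) (tpow K g) := by
  set X := momentMatrix μ i j with hXdef
  have hX : X = tpow K g * X * (tpow K g)ᴴ := by
    ext p q
    conv_lhs => rw [hXdef, momentMatrix, Matrix.of_apply]
    rw [← integral_left_translate μ hμ ⟨g, hg⟩]
    have : ∀ U : UG N, tpow K ((⟨g, hg⟩ * U : UG N) : Matrix (Fin N) (Fin N) ℂ) p i *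
        star (tpow K ((⟨g, hg⟩ * U : UG N) : Matrix (Fin N) (Fin N) ℂ) q j) =
        ∑ q', ∑ p', (tpow K g p p' * star (tpow K g q q')) *
          (tpow K (U : Matrix (Fin N) (Fin N) ℂ) p' i *
            star (tpow K (U : Matrix (Fin N) (Fin N) ℂ) q' j)) := by
      intro U
      rw [Matrix.UnitaryGroup.mul_val, tpow_mul, Matrix.mul_apply, Matrix.mul_apply, star_sum,
        Finset.sum_mul_sum, Finset.sum_comm]
      refine Finset.sum_congr rfl fun q' _ => Finset.sum_congr rfl fun p' _ => ?_
      rw [star_mul']; ring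
    simp only [this]
    rw [integral_finsetSum _ fun q' _ => integrable_finsetSum _ fun p' _ =>
      (integrable_tpow μ p' i q' j).const_mul _]
    rw [Matrix.mul_apply]
    refine Finset.sum_congr rfl fun q' _ => ?_
    rw [integral_finsetSum _ fun p' _ => (integrable_tpow μ p' i q' j).const_mul _,
      Matrix.mul_apply, Finset.sum_mul]
    refine Finset.sum_congr rfl fun p' _ => ?_
    rw [integral_const_mul, Matrix.conjTranspose_apply, hXdef, momentMatrix, Matrix.of_apply]
    ring
  have hu : (tpow K g)ᴴ * tpow K g = 1 := by
    rw [← tpow_conjTranspose, ← tpow_mul, ← Matrix.star_eq_conjTranspose,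
      Matrix.mem_unitaryGroup_iff'.1 hg, tpow_one]
  change X * tpow K g = tpow K g * X
  conv_lhs => rw [hX, mul_assoc, hu, mul_one]

/-- Contracting row indices along `σ` collapses the moments by unitarity. -/
lemma sum_momentMatrix {N K : ℕ} (μ : Measure (UG N)) [IsProbabilityMeasure μ]
    (i j : Fin K → Fin N) (σ : Perm (Fin K)) :
    ∑ p : Fin K → Fin N, momentMatrix μ i j p (fun s => p (σ s)) = deltaP σ i j := by
  simp only [momentMatrix, Matrix.of_apply]
  rw [← integral_finsetSum _ fun p _ => integrable_tpow μ p i _ j]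
  have : ∀ U : UG N, ∑ p : Fin K → Fin N, tpow K (U : Matrix (Fin N) (Fin N) ℂ) p i *
      star (tpow K (U : Matrix (Fin N) (Fin N) ℂ) (fun s => p (σ s)) j) = deltaP σ i j := by
    intro U
    have h1 : ∀ p : Fin K → Fin N, tpow K (U : Matrix (Fin N) (Fin N) ℂ) p i *
      star (tpow K (U : Matrix (Fin N) (Fin N) ℂ) (fun s => p (σ s)) j) =
        ∏ s, (U : Matrix (Fin N) (Fin N) ℂ) (p s) (i s) *
          star ((U : Matrix (Fin N) (Fin N) ℂ) (p s) (j (σ⁻¹ s))) := by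
      intro p
      rw [tpow_apply, tpow_apply, Finset.prod_mul_distrib, star_prod]
      congr 1
      refine Eq.trans ?_ (Equiv.prod_comp σ _)
      simp
    simp only [h1]
    rw [← Fintype.piFinset_univ, ← Finset.prod_univ_sum (fun _ => Finset.univ)
      (fun s x => (U : Matrix (Fin N) (Fin N) ℂ) x (i s) *
          star ((U : Matrix (Fin N) (Fin N) ℂ) x (j (σ⁻¹ s)))), deltaP,
      ← Equiv.prod_comp σ]
    refine Finset.prod_congr rfl fun s _ => ?_
    have h2 := congrFun (congrFun (Matrix.mem_unitaryGroup_iff'.1 U.2) (j s)) (i (σ s))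
    rw [Matrix.mul_apply, Matrix.one_apply] at h2
    simp only [Matrix.star_apply] at h2
    simp only [Perm.coe_inv, Equiv.symm_apply_apply]
    rw [Finset.sum_congr rfl fun x _ => mul_comm _ _, h2]
    simp only [eq_comm]
  simp only [this, integral_const, probReal_univ, one_smul]

/-- Weingarten formula for `U(N)` in the stable range, with the coefficients kept as a
convolution. -/
lemma momentMatrix_eq {N K : ℕ} (hK : K ≤ N) (μ : Measure (UG N)) [IsProbabilityMeasure μ]
    (hμ : ∀ g : UG N, μ.map (fun x => g * x) = μ) (W : Perm (Fin K) → ℂ)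
    (hW : conv (fun σ => (N : ℂ) ^ cyc σ) W = deltaId) (i j p q : Fin K → Fin N) :
    momentMatrix μ i j p q = ∑ τ, conv (fun σ => deltaP σ i j) W τ * deltaP τ p q := by
  obtain ⟨c, hc⟩ := exists_perm_coeff hK _ (momentMatrix_commute μ hμ i j)
  have h1 : conv c (fun σ => (N : ℂ) ^ cyc σ) = fun σ => deltaP σ i j := by
    funext σ
    rw [← sum_momentMatrix μ i j σ]
    simp only [hc]
    rw [Finset.sum_comm, conv]
    refine Finset.sum_congr rfl fun τ _ => ?_
    rw [← Finset.mul_sum, cyc_mul_comm, ← sum_colourings]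
    rfl
  have h2 : c = conv (fun σ => deltaP σ i j) W := by
    rw [← h1, conv_assoc, hW, conv_deltaId]
  rw [hc, h2]

end Haar

/-! ### Moments of the circular symplectic ensemble -/

section Ensemble

lemma prod_congruence_eq {n k : ℕ} (U : Matrix (Fin (2 * n)) (Fin (2 * n)) ℂ)
    (i : Fin (2 * k) → Fin (2 * n)) :
    ∏ s : Fin k, (Uᵀ * Jmat ℂ n * U) (i (lo s)) (i (hi s)) =
      ∑ p : Fin (2 * k) → Fin (2 * n),
        (∏ r : Fin k, Jmat ℂ n (p (lo r)) (p (hi r))) * tpow (2 * k) U p i := by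
  have h1 : ∀ a b, (Uᵀ * Jmat ℂ n * U) a b =
      ∑ w : Fin (2 * n) × Fin (2 * n), Jmat ℂ n w.1 w.2 * (U w.1 a * U w.2 b) := by
    intro a b
    rw [Fintype.sum_prod_type, Finset.sum_comm, Matrix.mul_apply]
    refine Finset.sum_congr rfl fun y _ => ?_
    rw [Matrix.mul_apply, Finset.sum_mul]
    refine Finset.sum_congr rfl fun x _ => ?_
    rw [Matrix.transpose_apply]; ring
  simp only [h1]
  rw [Finset.prod_univ_sum, Fintype.piFinset_univ]
  let E : (Fin (2 * k) → Fin (2 * n)) ≃ (Fin k → Fin (2 * n) × Fin (2 * n)) :=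
    { toFun := fun p r => (p (lo r), p (hi r))
      invFun := fun f t => let w := (pairEquiv k).symm t
        if w.2 then (f w.1).2 else (f w.1).1
      left_inv := fun p => by
        funext t
        obtain ⟨⟨r, b⟩, rfl⟩ := (pairEquiv k).surjective t
        simp only [Equiv.symm_apply_apply]
        cases b <;> simp
      right_inv := fun f => by
        funext r
        simp only [← pairEquiv_false, ← pairEquiv_true, Equiv.symm_apply_apply]
        simp }
  rw [← E.sum_comp]
  refine Finset.sum_congr rfl fun p _ => ?_
  rw [Finset.prod_mul_distrib, tpow_apply, prod_pairs]
  rfl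

lemma star_Jmat {n : ℕ} (x y : Fin (2 * n)) : star (Jmat ℂ n x y) = Jmat ℂ n x y := by
  simp only [Jmat, Matrix.of_apply]
  split_ifs <;> simp

lemma sum_deltaP {N K : ℕ} (τ : Equiv.Perm (Fin K)) (p : Fin K → Fin N)
    (F : (Fin K → Fin N) → ℂ) :
    ∑ q, F q * deltaP τ p q = F fun s => p (τ s) := by
  rw [Finset.sum_eq_single (fun s => p (τ s))]
  · simp [deltaP]
  · intro q _ hq
    obtain ⟨s, hs⟩ := Function.ne_iff.1 hq
    rw [deltaP, Finset.prod_eq_zero (Finset.mem_univ s) (if_neg (Ne.symm hs)), mul_zero]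
  · simp

/-- A scalar unitary `z` multiplies `Uᵀ J U` by `z ^ 2`. For `z` a root of unity of large enough
order, invariance then kills the moments with different numbers of factors. -/
lemma moment_eq_zero {m k l : ℕ} (hkl : k ≠ l) (ν : Measure (UG (2 * m)))
    (hν : ∀ g : UG (2 * m), ν.map (fun x => g * x) = ν)
    (i : Fin (2 * k) → Fin (2 * m)) (j : Fin (2 * l) → Fin (2 * m)) :
    ∫ U : UG (2 * m), (∏ s : Fin k,
          ((U : Matrix (Fin (2 * m)) (Fin (2 * m)) ℂ)ᵀ * Jmat ℂ m
            * (U : Matrix (Fin (2 * m)) (Fin (2 * m)) ℂ)) (i (lo s)) (i (hi s))) *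
        star (∏ s : Fin l,
          ((U : Matrix (Fin (2 * m)) (Fin (2 * m)) ℂ)ᵀ * Jmat ℂ m
            * (U : Matrix (Fin (2 * m)) (Fin (2 * m)) ℂ)) (j (lo s)) (j (hi s))) ∂ν = 0 := by
  set M := 2 * k + 2 * l + 1 with hM
  obtain ⟨z, hz⟩ : ∃ z : ℂ, IsPrimitiveRoot z M :=
    ⟨_, Complex.isPrimitiveRoot_exp M (by omega)⟩
  have hnorm : ‖z‖ = 1 := hz.norm'_eq_one (by omega)
  have hzz : z * star z = 1 := by
    rw [RCLike.star_def, Complex.mul_conj, Complex.normSq_eq_norm_sq, hnorm]; norm_num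
  have hg : (z • (1 : Matrix (Fin (2 * m)) (Fin (2 * m)) ℂ)) ∈
      Matrix.unitaryGroup (Fin (2 * m)) ℂ := by
    rw [Matrix.mem_unitaryGroup_iff, star_smul, star_one, smul_mul_smul_comm, hzz, one_smul,
      one_mul]
  have hne : z ^ (2 * k) * star (z ^ (2 * l)) ≠ 1 := by
    intro h
    have h1 : z ^ (2 * k) = z ^ (2 * l) := by
      calc z ^ (2 * k) = z ^ (2 * k) * (z * star z) ^ (2 * l) := by rw [hzz]; simp
        _ = (z ^ (2 * k) * star (z ^ (2 * l))) * z ^ (2 * l) := by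
          rw [mul_pow, star_pow]; ring
        _ = z ^ (2 * l) := by rw [h, one_mul]
    have := hz.pow_inj (by omega) (by omega) h1
    omega
  have hinv := integral_left_translate ν hν ⟨_, hg⟩ (fun U : UG (2 * m) => (∏ s : Fin k,
          ((U : Matrix (Fin (2 * m)) (Fin (2 * m)) ℂ)ᵀ * Jmat ℂ m
            * (U : Matrix (Fin (2 * m)) (Fin (2 * m)) ℂ)) (i (lo s)) (i (hi s))) *
        star (∏ s : Fin l,
          ((U : Matrix (Fin (2 * m)) (Fin (2 * m)) ℂ)ᵀ * Jmat ℂ m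
            * (U : Matrix (Fin (2 * m)) (Fin (2 * m)) ℂ)) (j (lo s)) (j (hi s))))
  have hscale : ∀ (U : Matrix (Fin (2 * m)) (Fin (2 * m)) ℂ) a b,
      ((z • U)ᵀ * Jmat ℂ m * (z • U)) a b = z ^ 2 * (Uᵀ * Jmat ℂ m * U) a b := by
    intro U a b
    rw [Matrix.transpose_smul, Matrix.smul_mul, Matrix.smul_mul, Matrix.mul_smul, smul_smul,
      Matrix.smul_apply, smul_eq_mul, sq]
  simp only [Matrix.UnitaryGroup.mul_val, Matrix.smul_mul, one_mul, hscale,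
    Finset.prod_mul_distrib, Finset.prod_const, Finset.card_univ, Fintype.card_fin,
    ← pow_mul, star_mul'] at hinv
  have hfac : ∀ A B : ℂ, z ^ (2 * k) * A * (star (z ^ (2 * l)) * star B) =
      (z ^ (2 * k) * star (z ^ (2 * l))) * (A * star B) := fun A B => by ring
  simp only [hfac] at hinv
  rw [integral_const_mul] at hinv
  by_contra h
  exact hne (mul_right_cancel₀ h (by rw [one_mul]; exact hinv))

end Ensemble

/-- Weingarten calculus for the circular symplectic ensemble,
Theorem 3.2, via `Ṽ = Uᵀ J U`. -/
theorem stmt10 (n k : ℕ) (hk : 0 < k) (hnk : k ≤ n)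
    (μ : Measure (UG (2 * n))) [IsProbabilityMeasure μ]
    (hμ : ∀ g : UG (2 * n), μ.map (fun x => g * x) = μ)
    (WgU : Equiv.Perm (Fin (2 * k)) → ℂ)
    (hWg : conv (fun σ => ((2 * n : ℕ) : ℂ) ^ cyc σ) WgU = deltaId)
    (hWg' : conv WgU (fun σ => ((2 * n : ℕ) : ℂ) ^ cyc σ) = deltaId)
    (i j : Fin (2 * k) → Fin (2 * n))
    (m k' l' : ℕ) (hm : 1 ≤ m) (hkl : k' ≠ l')
    (ν : Measure (UG (2 * m))) [IsProbabilityMeasure ν]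
    (hν : ∀ g : UG (2 * m), ν.map (fun x => g * x) = ν) :
    (∫ U : UG (2 * n), (∏ s : Fin k,
          ((U : Matrix (Fin (2 * n)) (Fin (2 * n)) ℂ)ᵀ * Jmat ℂ n
            * (U : Matrix (Fin (2 * n)) (Fin (2 * n)) ℂ)) (i (lo s)) (i (hi s))) *
        star (∏ s : Fin k,
          ((U : Matrix (Fin (2 * n)) (Fin (2 * n)) ℂ)ᵀ * Jmat ℂ n
            * (U : Matrix (Fin (2 * n)) (Fin (2 * n)) ℂ)) (j (lo s)) (j (hi s))) ∂μ
      = ∑ σ : Equiv.Perm (Fin (2 * k)),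
          deltaP σ i j *
            conv (fun τ => (-1 : ℂ) ^ k * sgn ℂ τ * (-(2 * (n : ℂ))) ^ ccount τ) WgU σ) ∧
    ∀ (i' : Fin (2 * k') → Fin (2 * m)) (j' : Fin (2 * l') → Fin (2 * m)),
      ∫ U : UG (2 * m), (∏ s : Fin k',
          ((U : Matrix (Fin (2 * m)) (Fin (2 * m)) ℂ)ᵀ * Jmat ℂ m
            * (U : Matrix (Fin (2 * m)) (Fin (2 * m)) ℂ)) (i' (lo s)) (i' (hi s))) *
        star (∏ s : Fin l',
          ((U : Matrix (Fin (2 * m)) (Fin (2 * m)) ℂ)ᵀ * Jmat ℂ m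
            * (U : Matrix (Fin (2 * m)) (Fin (2 * m)) ℂ)) (j' (lo s)) (j' (hi s))) ∂ν
        = 0 := by
  refine ⟨?_, fun i' j' => moment_eq_zero hkl ν hν i' j'⟩
  have hexp : ∀ U : UG (2 * n), (∏ s : Fin k,
          ((U : Matrix (Fin (2 * n)) (Fin (2 * n)) ℂ)ᵀ * Jmat ℂ n
            * (U : Matrix (Fin (2 * n)) (Fin (2 * n)) ℂ)) (i (lo s)) (i (hi s))) *
        star (∏ s : Fin k,
          ((U : Matrix (Fin (2 * n)) (Fin (2 * n)) ℂ)ᵀ * Jmat ℂ n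
            * (U : Matrix (Fin (2 * n)) (Fin (2 * n)) ℂ)) (j (lo s)) (j (hi s))) =
      ∑ p : Fin (2 * k) → Fin (2 * n), ∑ q : Fin (2 * k) → Fin (2 * n),
        ((∏ r : Fin k, Jmat ℂ n (p (lo r)) (p (hi r))) *
          ∏ r : Fin k, Jmat ℂ n (q (lo r)) (q (hi r))) *
        (tpow (2 * k) (U : Matrix (Fin (2 * n)) (Fin (2 * n)) ℂ) p i *
          star (tpow (2 * k) (U : Matrix (Fin (2 * n)) (Fin (2 * n)) ℂ) q j)) := by
    intro U
    rw [prod_congruence_eq, prod_congruence_eq, star_sum, Finset.sum_mul_sum]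
    refine Finset.sum_congr rfl fun p _ => Finset.sum_congr rfl fun q _ => ?_
    rw [star_mul', star_prod]
    simp only [star_Jmat]
    ring
  simp only [hexp]
  rw [integral_finsetSum _ fun p _ => integrable_finsetSum _ fun q _ =>
    (integrable_tpow μ p i q j).const_mul _]
  have hmom : ∀ p : Fin (2 * k) → Fin (2 * n),
      ∫ U : UG (2 * n), ∑ q : Fin (2 * k) → Fin (2 * n),
        ((∏ r : Fin k, Jmat ℂ n (p (lo r)) (p (hi r))) *
          ∏ r : Fin k, Jmat ℂ n (q (lo r)) (q (hi r))) *
        (tpow (2 * k) (U : Matrix (Fin (2 * n)) (Fin (2 * n)) ℂ) p i *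
          star (tpow (2 * k) (U : Matrix (Fin (2 * n)) (Fin (2 * n)) ℂ) q j)) ∂μ =
      ∑ τ, conv (fun σ => deltaP σ i j) WgU τ *
        ((∏ r : Fin k, Jmat ℂ n (p (lo r)) (p (hi r))) *
          ∏ r : Fin k, Jmat ℂ n (p (τ (lo r))) (p (τ (hi r)))) := by
    intro p
    rw [integral_finsetSum _ fun q _ => (integrable_tpow μ p i q j).const_mul _]
    have h1 : ∀ q, ∫ U : UG (2 * n), ((∏ r : Fin k, Jmat ℂ n (p (lo r)) (p (hi r))) *
          ∏ r : Fin k, Jmat ℂ n (q (lo r)) (q (hi r))) *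
        (tpow (2 * k) (U : Matrix (Fin (2 * n)) (Fin (2 * n)) ℂ) p i *
          star (tpow (2 * k) (U : Matrix (Fin (2 * n)) (Fin (2 * n)) ℂ) q j)) ∂μ =
        ∑ τ, (conv (fun σ => deltaP σ i j) WgU τ *
          ((∏ r : Fin k, Jmat ℂ n (p (lo r)) (p (hi r))) *
            ∏ r : Fin k, Jmat ℂ n (q (lo r)) (q (hi r)))) * deltaP τ p q := by
      intro q
      have h2 := momentMatrix_eq (by omega) μ hμ WgU hWg i j p q
      rw [momentMatrix, Matrix.of_apply] at h2
      rw [integral_const_mul, h2, Finset.mul_sum]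
      exact Finset.sum_congr rfl fun τ _ => by ring
    simp only [h1]
    rw [Finset.sum_comm]
    refine Finset.sum_congr rfl fun τ _ => ?_
    rw [sum_deltaP τ p (fun q => conv (fun σ => deltaP σ i j) WgU τ *
          ((∏ r : Fin k, Jmat ℂ n (p (lo r)) (p (hi r))) *
            ∏ r : Fin k, Jmat ℂ n (q (lo r)) (q (hi r))))]
  simp only [hmom]
  rw [Finset.sum_comm]
  simp only [← Finset.mul_sum, sum_J_eq]
  -- both sides are `∑ deltaP σ i j * T^Sp τ * WgU`, with arguments `σ⁻¹ τ` and `τ⁻¹ σ` of `WgU`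
  simp only [conv, Finset.sum_mul, Finset.mul_sum]
  rw [Finset.sum_comm]
  refine Finset.sum_congr rfl fun σ _ => Finset.sum_congr rfl fun τ _ => ?_
  rw [← wg_inv _ WgU hWg (σ⁻¹ * τ), _root_.mul_inv_rev, inv_inv]
  ring

end WgPaper
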